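/- For every η > 0 there exists a constant C > 0 such that for all real x ≥ 3, the number of integers n with 3 ≤ n < x and n ∉ 𝒯 is at most C·x^{1/2+η}. -/

import Mathlib

/-- `ε(n) = (n + √(n² − 4))/2`. -/
noncomputable def eps (n : ℤ) : ℝ := ((n : ℝ) + Real.sqrt ((n : ℝ) ^ 2 - 4)) / 2

/-- The set `𝒯` of integers `n ≥ 3` such that `ε(n)` is not a proper power `ε(n₀)^k`
with `k ≥ 2`, `n₀ ≥ 3`. -/
def Tset : Set ℤ :=
  {n : ℤ | 3 ≤ n ∧ ¬ ∃ k : ℕ, 2 ≤ k ∧ ∃ n₀ : ℤ, 3 ≤ n₀ ∧ eps n = eps n₀ ^ k}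

theorem eps_add_inv (n : ℤ) (hn : 3 ≤ n) : eps n + (eps n)⁻¹ = n := by
  have h3 : (3 : ℝ) ≤ n := by exact_mod_cast hn
  have hs : Real.sqrt ((n : ℝ) ^ 2 - 4) ^ 2 = (n : ℝ) ^ 2 - 4 := Real.sq_sqrt (by nlinarith)
  have h0 : 0 ≤ Real.sqrt ((n : ℝ) ^ 2 - 4) := Real.sqrt_nonneg _
  have hp : 0 < eps n := by unfold eps; linarith
  have h1 : eps n * eps n + 1 = n * eps n := by unfold eps; nlinarith
  field_simp
  nlinarith

theorem eps_lower (n : ℤ) (hn : 3 ≤ n) : (n : ℝ) - 1 ≤ eps n := by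
  have h3 : (3 : ℝ) ≤ n := by exact_mod_cast hn
  have : (n : ℝ) - 2 ≤ Real.sqrt ((n : ℝ) ^ 2 - 4) := Real.le_sqrt_of_sq_le (by nlinarith)
  unfold eps; linarith

theorem count_not_in_Tset (η : ℝ) (hη : 0 < η) :
    ∃ C : ℝ, 0 < C ∧ ∀ x : ℝ, 3 ≤ x →
      (({n : ℤ | 3 ≤ n ∧ (n : ℝ) < x ∧ n ∉ Tset}.ncard : ℝ)) ≤ C * x ^ ((1 : ℝ) / 2 + η) := by
  have hl2 : 0 < Real.log 2 := Real.log_pos (by norm_num)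
  refine ⟨1 / (η * Real.log 2), by positivity, fun x hx => ?_⟩
  have hx0 : 0 < x := by linarith
  set K := ⌊Real.log x / Real.log 2⌋₊ with hK
  set M := ⌊Real.sqrt x⌋₊ with hM
  let f : ℕ × ℕ → ℤ := fun p => ⌊eps (p.2 + 1) ^ p.1 + (eps (p.2 + 1) ^ p.1)⁻¹⌋
  let F : Finset ℤ := (Finset.Icc 1 K ×ˢ Finset.Icc 1 M).image f
  have hsub : {n : ℤ | 3 ≤ n ∧ (n : ℝ) < x ∧ n ∉ Tset} ⊆ (F : Set ℤ) := by
    rintro n ⟨hn, hnx, hT⟩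
    have hex : ∃ k : ℕ, 2 ≤ k ∧ ∃ n₀ : ℤ, 3 ≤ n₀ ∧ eps n = eps n₀ ^ k := by
      by_contra h
      exact hT ⟨hn, h⟩
    obtain ⟨k, hk, m, hm, he⟩ := hex
    have hsum := eps_add_inv n hn
    have hlow := eps_lower m hm
    have hm3 : (3 : ℝ) ≤ m := by exact_mod_cast hm
    have hn3 : (3 : ℝ) ≤ n := by exact_mod_cast hn
    have hpos : 0 < eps n := by linarith [eps_lower n hn]
    have hlt : eps n < x := by
      have := inv_pos.mpr hpos
      linarith
    have hpow : ((m : ℝ) - 1) ^ k < x :=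
      lt_of_le_of_lt (pow_le_pow_left₀ (by linarith) hlow k) (he ▸ hlt)
    have h2k : (2 : ℝ) ^ k < x :=
      lt_of_le_of_lt (pow_le_pow_left₀ (by norm_num) (by linarith) k) hpow
    have hm2 : ((m : ℝ) - 1) ^ 2 < x :=
      lt_of_le_of_lt (pow_le_pow_right₀ (by linarith) hk) hpow
    have hcast : (((m - 1).toNat : ℕ) : ℤ) = m - 1 := Int.toNat_of_nonneg (by omega)
    have hcastR : (((m - 1).toNat : ℕ) : ℝ) = (m : ℝ) - 1 := by
      have : ((((m - 1).toNat : ℕ) : ℤ) : ℝ) = ((m - 1 : ℤ) : ℝ) := by rw [hcast]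
      push_cast at this
      simpa using this
    refine Finset.mem_coe.mpr (Finset.mem_image.mpr ⟨(k, (m - 1).toNat), ?_, ?_⟩)
    · simp only [Finset.mem_product, Finset.mem_Icc]
      refine ⟨⟨by omega, Nat.le_floor ?_⟩, by omega, Nat.le_floor ?_⟩
      · rw [le_div_iff₀ hl2, ← Real.log_pow]
        exact Real.log_le_log (by positivity) h2k.le
      · rw [hcastR]
        exact Real.le_sqrt_of_sq_le hm2.le
    · simp only [f]
      rw [hcast, sub_add_cancel, ← he, hsum, Int.floor_intCast]
  have hcard : {n : ℤ | 3 ≤ n ∧ (n : ℝ) < x ∧ n ∉ Tset}.ncard ≤ K * M := by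
    calc _ ≤ (F : Set ℤ).ncard := Set.ncard_le_ncard hsub F.finite_toSet
      _ = F.card := Set.ncard_coe_finset F
      _ ≤ (Finset.Icc 1 K ×ˢ Finset.Icc 1 M).card := Finset.card_image_le
      _ = K * M := by simp [Finset.card_product]
  have hlx : 0 ≤ Real.log x := Real.log_nonneg (by linarith)
  have hKle : (K : ℝ) ≤ Real.log x / Real.log 2 := Nat.floor_le (by positivity)
  have hMle : (M : ℝ) ≤ Real.sqrt x := Nat.floor_le (by positivity)
  have hlog : Real.log x ≤ x ^ η / η := Real.log_le_rpow_div hx0.le hη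
  calc _ ≤ ((K * M : ℕ) : ℝ) := by exact_mod_cast hcard
    _ = (K : ℝ) * M := by push_cast; ring
    _ ≤ (x ^ η / η / Real.log 2) * Real.sqrt x := by
        gcongr
        exact hKle.trans (by gcongr)
    _ = _ := by
        rw [Real.rpow_add hx0, Real.sqrt_eq_rpow]
        field_simp
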